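/- Let S = ⟨S, δ, L⟩ and S' = ⟨S', δ', L'⟩ be fuzzy labeled transition systems that are witnessed w.r.t. f∃ΔPDL, and let Z be a crisp simulation between S and S'. Then for every formula φ of f∃ΔPDL and all states x ∈ S, x' ∈ S', if Z(x,x') holds then φ^S(x) ≤ φ^S'(x'). -/

import Mathlib

open unitInterval

noncomputable section
attribute [local instance] Classical.propDecidable

instance : Fact ((0:ℝ) ≤ 1) := ⟨zero_le_one⟩

/-- A left-continuous t-norm on the unit interval `[0,1]`: a commutative, associative
binary operation with neutral element `1`, increasing in both arguments, that
distributes over suprema of nonempty sets (left-continuity). -/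
structure Tnorm where
  mul : I → I → I
  mul_comm : ∀ x y, mul x y = mul y x
  mul_assoc : ∀ x y z, mul (mul x y) z = mul x (mul y z)
  mul_one : ∀ x, mul x 1 = x
  mul_le_mul : ∀ {a b c d : I}, a ≤ b → c ≤ d → mul a c ≤ mul b d
  left_continuous : ∀ (x : I) (s : Set I), s.Nonempty → mul x (sSup s) = sSup (mul x '' s)

/-- The residuum of a t-norm: `(x ⇒ y) = sup {z | z ⊗ x ≤ y}`. -/
def Tnorm.res (T : Tnorm) (x y : I) : I := sSup {z : I | T.mul z x ≤ y}

/-- A fuzzy labeled transition system over actions `A`, propositions `P`, states `St`. -/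
structure FLTS (A P St : Type) where
  delta : St → A → St → I
  label : St → P → I

/-- A crisp simulation between two FLTSs. -/
def IsSimulation {A P S S' : Type} (M : FLTS A P S) (M' : FLTS A P S')
    (Z : S → S' → Prop) : Prop :=
  (∀ x x', Z x x' → ∀ p, M.label x p ≤ M'.label x' p) ∧
  (∀ x y x' (ρ : A), Z x x' → 0 < M.delta x ρ y →
    ∃ y', M.delta x ρ y ≤ M'.delta x' ρ y' ∧ Z y y')
mutual
/-- Formulas of f∃ΔPDL. -/
inductive EForm (A P : Type) : Type
  | const : I → EForm A P
  | prop : P → EForm A P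
  | baaz : EForm A P → EForm A P
  | and : EForm A P → EForm A P → EForm A P
  | or : EForm A P → EForm A P → EForm A P
  | impl : I → EForm A P → EForm A P
  | dia : EProg A P → EForm A P → EForm A P
/-- Programs of f∃ΔPDL. -/
inductive EProg (A P : Type) : Type
  | act : A → EProg A P
  | comp : EProg A P → EProg A P → EProg A P
  | union : EProg A P → EProg A P → EProg A P
  | star : EProg A P → EProg A P
  | test : EForm A P → EProg A P
end

/-- The ⊗-product of the values of `r` along the path `x :: l`. -/
def chainProd (T : Tnorm) {St : Type} (r : St → St → I) : St → List St → I
  | _, [] => 1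
  | x, y :: l => T.mul (r x y) (chainProd T r y l)

mutual
/-- Semantics of f∃ΔPDL formulas. -/
def eformSem (T : Tnorm) {A P St : Type} (M : FLTS A P St) : EForm A P → St → I
  | .const a, _ => a
  | .prop p, x => M.label x p
  | .baaz φ, x => if eformSem T M φ x = 1 then 1 else 0
  | .and φ ψ, x => min (eformSem T M φ x) (eformSem T M ψ x)
  | .or φ ψ, x => max (eformSem T M φ x) (eformSem T M ψ x)
  | .impl a φ, x => T.res a (eformSem T M φ x)
  | .dia α φ, x => ⨆ y, T.mul (eprogSem T M α x y) (eformSem T M φ y)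
/-- Semantics of f∃ΔPDL programs. -/
def eprogSem (T : Tnorm) {A P St : Type} (M : FLTS A P St) : EProg A P → St → St → I
  | .act ρ, x, y => M.delta x ρ y
  | .comp α β, x, y => ⨆ z, T.mul (eprogSem T M α x z) (eprogSem T M β z y)
  | .union α β, x, y => max (eprogSem T M α x y) (eprogSem T M β x y)
  | .star α, x, y =>
      sSup {v : I | ∃ l : List St, l.getLastD x = y ∧ v = chainProd T (eprogSem T M α) x l}
  | .test φ, x, y => if x = y then eformSem T M φ x else 0
end

/-- An FLTS is witnessed w.r.t. f∃ΔPDL: every supremum occurring in the semantic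
clauses (for `⟨α⟩φ`, `α∘β` and `α*`) is attained by a greatest element. -/
def WitnessedE (T : Tnorm) {A P St : Type} (M : FLTS A P St) : Prop :=
  (∀ (α : EProg A P) (φ : EForm A P) (x : St), ∃ y : St, ∀ z : St,
      T.mul (eprogSem T M α x z) (eformSem T M φ z) ≤
        T.mul (eprogSem T M α x y) (eformSem T M φ y)) ∧
  (∀ (α β : EProg A P) (x y : St), ∃ z : St, ∀ w : St,
      T.mul (eprogSem T M α x w) (eprogSem T M β w y) ≤
        T.mul (eprogSem T M α x z) (eprogSem T M β z y)) ∧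
  (∀ (α : EProg A P) (x y : St), ∃ l : List St, l.getLastD x = y ∧
      ∀ l' : List St, l'.getLastD x = y →
        chainProd T (eprogSem T M α) x l' ≤ chainProd T (eprogSem T M α) x l)

theorem aux_mul_zero (T : Tnorm) (x : I) : T.mul x 0 = 0 := by
  apply le_antisymm _ unitInterval.nonneg'
  calc T.mul x 0 ≤ T.mul 1 0 := T.mul_le_mul unitInterval.le_one' le_rfl
    _ = 0 := by rw [T.mul_comm, T.mul_one]

theorem aux_pos (T : Tnorm) {x y : I} (h : 0 < T.mul x y) : 0 < x ∧ 0 < y := by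
  constructor
  · rw [unitInterval.pos_iff_ne_zero]
    rintro rfl
    rw [T.mul_comm, aux_mul_zero] at h
    exact lt_irrefl _ h
  · rw [unitInterval.pos_iff_ne_zero]
    rintro rfl
    rw [aux_mul_zero] at h
    exact lt_irrefl _ h

theorem aux_bdd (s : Set I) : BddAbove s := ⟨1, fun _ _ => unitInterval.le_one'⟩

theorem aux_iSup_le {St : Type} {f : St → I} {y : St} (h : ∀ z, f z ≤ f y) : (⨆ z, f z) = f y :=
  haveI : Nonempty St := ⟨y⟩
  le_antisymm (ciSup_le h) (le_ciSup (aux_bdd _) y)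

theorem aux_chain (T : Tnorm) {S S' : Type} (r : S → S → I) (r' : S' → S' → I)
    (Z : S → S' → Prop)
    (h : ∀ x y x', Z x x' → 0 < r x y → ∃ y', r x y ≤ r' x' y' ∧ Z y y') :
    ∀ (l : List S) (x : S) (x' : S'), Z x x' → 0 < chainProd T r x l →
      ∃ l' : List S', chainProd T r x l ≤ chainProd T r' x' l' ∧
        Z (l.getLastD x) (l'.getLastD x')
  | [], x, x', hz, _ => ⟨[], le_rfl, hz⟩
  | y :: l, x, x', hz, hp => by
    have hp2 : 0 < T.mul (r x y) (chainProd T r y l) := hp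
    obtain ⟨h1, h2⟩ := aux_pos T hp2
    obtain ⟨y', hy, hzy⟩ := h x y x' hz h1
    obtain ⟨l', hl, hzl⟩ := aux_chain T r r' Z h l y y' hzy h2
    refine ⟨y' :: l', T.mul_le_mul hy hl, ?_⟩
    rw [List.getLastD_cons, List.getLastD_cons]
    exact hzl

mutual
theorem aux_form {A P S S' : Type} (T : Tnorm) (M : FLTS A P S) (M' : FLTS A P S')
    (hM : WitnessedE T M) (Z : S → S' → Prop) (hZ : IsSimulation M M' Z) :
    ∀ (φ : EForm A P) (x : S) (x' : S'),
      Z x x' → eformSem T M φ x ≤ eformSem T M' φ x'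
  | .const a, x, x', h => by simp only [eformSem]; exact le_rfl
  | .prop p, x, x', h => by simp only [eformSem]; exact hZ.1 x x' h p
  | .baaz φ, x, x', h => by
    have ih := aux_form T M M' hM Z hZ φ x x' h
    simp only [eformSem]
    split_ifs with h1 h2 h2
    · exact le_rfl
    · exact absurd (le_antisymm unitInterval.le_one' (h1 ▸ ih)) h2
    · exact unitInterval.nonneg'
    · exact le_rfl
  | .and φ ψ, x, x', h => by
    simp only [eformSem]
    exact min_le_min (aux_form T M M' hM Z hZ φ x x' h) (aux_form T M M' hM Z hZ ψ x x' h)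
  | .or φ ψ, x, x', h => by
    simp only [eformSem]
    exact max_le_max (aux_form T M M' hM Z hZ φ x x' h) (aux_form T M M' hM Z hZ ψ x x' h)
  | .impl a φ, x, x', h => by
    have ih := aux_form T M M' hM Z hZ φ x x' h
    simp only [eformSem, Tnorm.res]
    apply csSup_le_csSup (aux_bdd _)
    · refine ⟨0, ?_⟩
      change T.mul 0 a ≤ _
      rw [T.mul_comm, aux_mul_zero]
      exact unitInterval.nonneg'
    · intro z hz
      exact le_trans hz ih
  | .dia α φ, x, x', h => by
    simp only [eformSem]
    obtain ⟨y, hy⟩ := hM.1 α φ x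
    rw [aux_iSup_le hy]
    rcases eq_or_lt_of_le (unitInterval.nonneg' :
      0 ≤ T.mul (eprogSem T M α x y) (eformSem T M φ y)) with h0 | h0
    · rw [← h0]; exact unitInterval.nonneg'
    · obtain ⟨y', hy', hzy⟩ := aux_prog T M M' hM Z hZ α x y x' h (aux_pos T h0).1
      exact le_trans (T.mul_le_mul hy' (aux_form T M M' hM Z hZ φ y y' hzy))
        (le_ciSup (f := fun y' => T.mul (eprogSem T M' α x' y') (eformSem T M' φ y'))
          (aux_bdd _) y')
theorem aux_prog {A P S S' : Type} (T : Tnorm) (M : FLTS A P S) (M' : FLTS A P S')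
    (hM : WitnessedE T M) (Z : S → S' → Prop) (hZ : IsSimulation M M' Z) :
    ∀ (α : EProg A P) (x y : S) (x' : S'), Z x x' → 0 < eprogSem T M α x y →
      ∃ y', eprogSem T M α x y ≤ eprogSem T M' α x' y' ∧ Z y y'
  | .act ρ, x, y, x', h, hp => by
    simp only [eprogSem] at hp ⊢
    exact hZ.2 x y x' ρ h hp
  | .comp α β, x, y, x', h, hp => by
    simp only [eprogSem] at hp ⊢
    obtain ⟨z, hz⟩ := hM.2.1 α β x y
    rw [aux_iSup_le hz] at hp ⊢
    obtain ⟨h1, h2⟩ := aux_pos T hp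
    obtain ⟨z', hz', hzz⟩ := aux_prog T M M' hM Z hZ α x z x' h h1
    obtain ⟨y', hy', hzy⟩ := aux_prog T M M' hM Z hZ β z y z' hzz h2
    exact ⟨y', le_trans (T.mul_le_mul hz' hy')
      (le_ciSup (f := fun z' => T.mul (eprogSem T M' α x' z') (eprogSem T M' β z' y'))
          (aux_bdd _) z'), hzy⟩
  | .union α β, x, y, x', h, hp => by
    simp only [eprogSem] at hp ⊢
    rcases le_total (eprogSem T M α x y) (eprogSem T M β x y) with hl | hl
    · rw [max_eq_right hl] at hp ⊢
      obtain ⟨y', hy', hzy⟩ := aux_prog T M M' hM Z hZ β x y x' h hp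
      exact ⟨y', le_trans hy' (le_max_right _ _), hzy⟩
    · rw [max_eq_left hl] at hp ⊢
      obtain ⟨y', hy', hzy⟩ := aux_prog T M M' hM Z hZ α x y x' h hp
      exact ⟨y', le_trans hy' (le_max_left _ _), hzy⟩
  | .star α, x, y, x', h, hp => by
    have ih := aux_prog T M M' hM Z hZ α
    simp only [eprogSem] at hp ⊢
    obtain ⟨l, hl, hmax⟩ := hM.2.2 α x y
    have hs : sSup {v : I | ∃ l : List S, l.getLastD x = y ∧
        v = chainProd T (eprogSem T M α) x l} = chainProd T (eprogSem T M α) x l := by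
      apply le_antisymm
      · refine csSup_le ⟨chainProd T (eprogSem T M α) x l, l, hl, rfl⟩ ?_
        rintro v ⟨l', hl', rfl⟩
        exact hmax l' hl'
      · exact le_csSup (aux_bdd _) ⟨l, hl, rfl⟩
    rw [hs] at hp ⊢
    obtain ⟨l', hl', hzl⟩ := aux_chain T _ (eprogSem T M' α) Z ih l x x' h hp
    exact ⟨l'.getLastD x', le_trans hl' (le_csSup (aux_bdd _) ⟨l', rfl, rfl⟩), hl ▸ hzl⟩
  | .test φ, x, y, x', h, hp => by
    simp only [eprogSem] at hp ⊢
    by_cases hxy : x = y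
    · subst hxy
      refine ⟨x', ?_, h⟩
      rw [if_pos rfl, if_pos rfl]
      exact aux_form T M M' hM Z hZ φ x x' h
    · rw [if_neg hxy] at hp
      exact absurd hp (lt_irrefl _)
end

/-- Formulas of f∃ΔPDL are preserved under crisp simulations between witnessed FLTSs. -/
theorem preservation_simulation_fePDL
    {A P S S' : Type} [Nonempty A] [Nonempty P] [Nonempty S] [Nonempty S']
    (T : Tnorm) (M : FLTS A P S) (M' : FLTS A P S')
    (hM : WitnessedE T M) (hM' : WitnessedE T M')
    (Z : S → S' → Prop) (hZ : IsSimulation M M' Z) :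
    ∀ (φ : EForm A P) (x : S) (x' : S'),
      Z x x' → eformSem T M φ x ≤ eformSem T M' φ x' := by
  exact aux_form T M M' hM Z hZ
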